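/- arXiv:1504.07594 — 3 statements merged into one kernel-verified Lean document; each statement's English description precedes it below -/
import Mathlib

section
/- Assume the comodule category A_F of the normal triangular matrix comonad F is hereditary. Then every injective object X of A_F is isomorphic to the cofree comodule F(E) on some object E = (E₁, …, Eₙ) of A₁ × ⋯ × Aₙ with each E_i injective in A_i; in particular, every structure map d_X^{ij} : X_j ⟶ F_{ij}(X_i) (for i < j) is a split epimorphism. -/
/-!
STATEMENT 12: If the category of comodules over a normal triangular matrix comonad
`F` on `A₁ × ⋯ × Aₙ` is hereditary, then every injective comodule `M` is isomorphic
to a cofree comodule `F(E)` on a componentwise-injective object `E`, and all the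
structure maps `d_M^{ij}` (for `i < j`) are split epimorphisms.  The cofree functor
is presented as a right adjoint of the (concrete) forgetful functor.
-/

open CategoryTheory Limits

universe v u

variable {n : ℕ} {A : Fin n → Type u} [∀ i, Category.{v} (A i)]
  [∀ i, Abelian (A i)] [∀ i, EnoughInjectives (A i)]
variable (F : ∀ ⦃i j : Fin n⦄, i < j → (A i ⥤ A j))
variable (δ : ∀ ⦃i k j : Fin n⦄ (h₁ : i < k) (h₂ : k < j), F (h₁.trans h₂) ⟶ F h₁ ⋙ F h₂)

/-- A comodule over the normal triangular matrix comonad determined by the data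
`(F, δ)`. -/
structure Comod where
  X : ∀ i, A i
  d : ∀ {i j : Fin n} (h : i < j), X j ⟶ (F h).obj (X i)
  compat : ∀ {i k j : Fin n} (h₁ : i < k) (h₂ : k < j),
    d h₂ ≫ (F h₂).map (d h₁) = d (h₁.trans h₂) ≫ (δ h₁ h₂).app (X i)

/-- Morphisms of comodules. -/
@[ext]
structure ComodHom (M N : Comod F δ) where
  f : ∀ i, M.X i ⟶ N.X i
  comm : ∀ {i j : Fin n} (h : i < j), f j ≫ N.d h = M.d h ≫ (F h).map (f i)

instance : Category (Comod F δ) where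
  Hom M N := ComodHom F δ M N
  id M := ⟨fun i => 𝟙 (M.X i), fun h => by simp⟩
  comp f g := ⟨fun i => f.f i ≫ g.f i, fun h => by
    rw [Category.assoc, g.comm, ← Category.assoc, f.comm, Category.assoc, Functor.map_comp]⟩
  id_comp f := by apply ComodHom.ext; funext i; exact Category.id_comp _
  comp_id f := by apply ComodHom.ext; funext i; exact Category.comp_id _
  assoc f g h := by apply ComodHom.ext; funext i; exact Category.assoc _ _ _

/-- A category is hereditary if for every epimorphism `e : E ⟶ X` with `E` injective,
`X` is also injective. -/
def Hereditary (C : Type*) [Category C] : Prop :=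
  ∀ ⦃E X : C⦄ (e : E ⟶ X), Epi e → Injective E → Injective X

/-- The forgetful functor from comodules to `A₁ × ⋯ × Aₙ`. -/
def forgetComod : Comod F δ ⥤ (∀ i, A i) where
  obj M := M.X
  map f := f.f


set_option linter.unusedSectionVars false
set_option linter.style.haveILetI false
set_option linter.unusedVariables false

namespace Comod

variable {F δ}

theorem comp_f {M N K : Comod F δ} (f : M ⟶ N) (g : N ⟶ K) (i : Fin n) :
    ComodHom.f (f ≫ g) i = ComodHom.f f i ≫ ComodHom.f g i := rfl

theorem id_f (M : Comod F δ) (i : Fin n) : ComodHom.f (𝟙 M) i = 𝟙 (M.X i) := rfl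

theorem hom_comm {M N : Comod F δ} (f : M ⟶ N) {i j : Fin n} (h : i < j) :
    ComodHom.f f j ≫ N.d h = M.d h ≫ (F h).map (ComodHom.f f i) := ComodHom.comm f h

theorem mono_of {M N : Comod F δ} (f : M ⟶ N) (h : ∀ i, Mono (ComodHom.f f i)) : Mono f := by
  constructor
  intro Z a b hab
  apply ComodHom.ext
  funext i
  haveI := h i
  rw [← cancel_mono (ComodHom.f f i)]
  exact congrArg (fun t => ComodHom.f t i) hab

theorem epi_of {M N : Comod F δ} (f : M ⟶ N) (h : ∀ i, Epi (ComodHom.f f i)) : Epi f := by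
  constructor
  intro Z a b hab
  apply ComodHom.ext
  funext i
  haveI := h i
  rw [← cancel_epi (ComodHom.f f i)]
  exact congrArg (fun t => ComodHom.f t i) hab

/-- Comodule with zero structure maps. -/
def triv (hadd : ∀ ⦃i j : Fin n⦄ (h : i < j), (F h).Additive) (Y : ∀ i, A i) : Comod F δ where
  X := Y
  d := fun _ => 0
  compat := fun h₁ h₂ => by simp

/-- Maps out of a trivial comodule. -/
def trivDesc (hadd : ∀ ⦃i j : Fin n⦄ (h : i < j), (F h).Additive) (Y : ∀ i, A i)
    (N : Comod F δ) (f : ∀ i, Y i ⟶ N.X i)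
    (hf : ∀ ⦃i j : Fin n⦄ (h : i < j), f j ≫ N.d h = 0) :
    (triv hadd Y : Comod F δ) ⟶ N :=
  ComodHom.mk f (fun h => (hf h).trans zero_comp.symm)

/-- All the structure maps out of `N.X j`, together. -/
noncomputable def allD (N : Comod F δ) (j : Fin n) :
    N.X j ⟶ ∏ᶜ (fun i : {i : Fin n // i < j} => (F i.2).obj (N.X i.1)) :=
  Pi.lift (fun i => N.d i.2)

theorem comp_allD_eq_zero (N : Comod F δ) {j : Fin n} {Z : A j} (x : Z ⟶ N.X j)
    (hx : ∀ ⦃i : Fin n⦄ (h : i < j), x ≫ N.d h = 0) : x ≫ N.allD j = 0 := by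
  apply Pi.hom_ext
  rintro ⟨i, h⟩
  simp [allD, hx h]

/-- The primitive part. -/
noncomputable def prim (N : Comod F δ) (j : Fin n) : A j := kernel (N.allD j)

noncomputable def primι (N : Comod F δ) (j : Fin n) : N.prim j ⟶ N.X j := kernel.ι (N.allD j)

instance (N : Comod F δ) (j : Fin n) : Mono (N.primι j) :=
  inferInstanceAs (Mono (kernel.ι (N.allD j)))

theorem primι_d (N : Comod F δ) {i j : Fin n} (h : i < j) : N.primι j ≫ N.d h = 0 := by
  have : N.d h = N.allD j ≫ Pi.π _ (⟨i, h⟩ : {i : Fin n // i < j}) := by simp [allD]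
  have h0 : N.primι j ≫ N.allD j = 0 := kernel.condition _
  rw [this, ← Category.assoc, h0, zero_comp]

theorem exists_prim_lift (N : Comod F δ) {j : Fin n} {Z : A j} (x : Z ⟶ N.X j)
    (hx : ∀ ⦃i : Fin n⦄ (h : i < j), x ≫ N.d h = 0) : ∃ y : Z ⟶ N.prim j, y ≫ N.primι j = x :=
  ⟨kernel.lift _ x (N.comp_allD_eq_zero x hx), kernel.lift_ι _ _ _⟩

theorem prim_injective (hadd : ∀ ⦃i j : Fin n⦄ (h : i < j), (F h).Additive)
    (M : Comod F δ) (hM : Injective M) (j : Fin n) : Injective (M.prim j) := by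
  let I : ∀ j, A j := fun j => Injective.under (M.prim j)
  let T : (triv hadd M.prim : Comod F δ) ⟶ M :=
    trivDesc hadd M.prim M M.primι (fun i j h => M.primι_d h)
  let c : (triv hadd M.prim : Comod F δ) ⟶ triv hadd I :=
    trivDesc hadd _ _ (fun j => Injective.ι (M.prim j)) (fun i j h => comp_zero)
  haveI : Mono c := mono_of c (fun i => inferInstanceAs (Mono (Injective.ι (M.prim i))))
  let e : (triv hadd I : Comod F δ) ⟶ M := Injective.factorThru T c
  have he : c ≫ e = T := Injective.comp_factorThru T c
  obtain ⟨y, hy⟩ := M.exists_prim_lift (Z := I j) (ComodHom.f e j) (fun i h =>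
    (hom_comm e h).trans zero_comp)
  have h1 : Injective.ι (M.prim j) ≫ y = 𝟙 _ := by
    rw [← cancel_mono (M.primι j), Category.assoc, hy, Category.id_comp]
    exact congrArg (fun t => ComodHom.f t j) he
  exact Retract.injective (Y := I j) ⟨Injective.ι (M.prim j), y, h1⟩

theorem cofree_unique (hadd : ∀ ⦃i j : Fin n⦄ (h : i < j), (F h).Additive)
    (cofree : (∀ i, A i) ⥤ Comod F δ) (adj : forgetComod F δ ⊣ cofree) (E : ∀ i, A i)
    {j : Fin n} {Z : A j} (x : Z ⟶ (cofree.obj E).X j)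
    (hx : ∀ ⦃i : Fin n⦄ (h : i < j), x ≫ (cofree.obj E).d h = 0)
    (hε : x ≫ (adj.counit.app E : ∀ i, _) j = 0) : x = 0 := by
  let N := cofree.obj E
  let ε : ∀ i, N.X i ⟶ E i := adj.counit.app E
  let K : ∀ i, A i := fun i => kernel (N.primι i ≫ ε i)
  let κ : ∀ i, K i ⟶ N.X i := fun i => kernel.ι (N.primι i ≫ ε i) ≫ N.primι i
  let t : (triv hadd K : Comod F δ) ⟶ N := trivDesc hadd K N κ
    (fun i j h => by simp only [κ, Category.assoc, primι_d, comp_zero])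
  let z : (triv hadd K : Comod F δ) ⟶ N := trivDesc hadd K N (fun i => 0)
    (fun i j h => zero_comp)
  have htz : t = z := by
    apply (adj.homEquiv _ _).symm.injective
    rw [adj.homEquiv_counit, adj.homEquiv_counit]
    funext i
    change κ i ≫ ε i = (0 : K i ⟶ N.X i) ≫ ε i
    rw [zero_comp, Category.assoc]
    exact kernel.condition _
  have hκ : κ j = 0 := congrArg (fun t => ComodHom.f t j) htz
  obtain ⟨y, hy⟩ := N.exists_prim_lift x hx
  have h2 : y ≫ (N.primι j ≫ ε j) = 0 := by
    rw [← Category.assoc, hy]; exact hε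
  have h3 : kernel.lift _ y h2 ≫ κ j = x := by
    simp only [κ]
    rw [← Category.assoc, kernel.lift_ι, hy]
  rw [← h3, hκ, comp_zero]

theorem iso_cofree (hadd : ∀ ⦃i j : Fin n⦄ (h : i < j), (F h).Additive)
    (hlex : ∀ ⦃i j : Fin n⦄ (h : i < j), PreservesFiniteLimits (F h))
    (cofree : (∀ i, A i) ⥤ Comod F δ) (adj : forgetComod F δ ⊣ cofree)
    (M : Comod F δ) (hM : Injective M) : Nonempty (M ≅ cofree.obj M.prim) := by
  have hE := M.prim_injective hadd hM
  let E := M.prim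
  let N := cofree.obj E
  let ε : ∀ i, N.X i ⟶ E i := adj.counit.app E
  let ρ : ∀ i, M.X i ⟶ E i := fun i => Injective.factorThru (𝟙 (M.prim i)) (M.primι i)
  have hρ : ∀ i, M.primι i ≫ ρ i = 𝟙 _ := fun i => Injective.comp_factorThru _ _
  let φ : M ⟶ N := adj.homEquiv M E ρ
  have hφ : ∀ i, ComodHom.f φ i ≫ ε i = ρ i := by
    intro i
    have h := (adj.homEquiv M E).symm_apply_apply ρ
    rw [adj.homEquiv_counit] at h
    exact congrFun h i
  have mφ : ∀ m : ℕ, ∀ j : Fin n, j.1 = m → Mono (ComodHom.f φ j) := by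
    intro m
    induction m using Nat.strong_induction_on with
    | _ m ih =>
    intro j hj
    apply Preadditive.mono_of_cancel_zero
    intro Z x hx
    obtain ⟨y, hy⟩ := M.exists_prim_lift x (fun i h => by
      haveI := ih i.1 (by have := Fin.lt_def.1 h; omega) i rfl
      haveI := hlex h
      rw [← cancel_mono ((F h).map (ComodHom.f φ i)), Category.assoc, ← hom_comm φ h,
        ← Category.assoc, hx, zero_comp, zero_comp])
    have : y = 0 := by
      rw [← Category.comp_id y, ← hρ j, ← Category.assoc, hy, ← hφ j, ← Category.assoc, hx,
        zero_comp]
    rw [← hy, this, zero_comp]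
  haveI : Mono φ := mono_of φ (fun i => mφ i.1 i rfl)
  let r : N ⟶ M := Injective.factorThru (𝟙 M) φ
  have hr : φ ≫ r = 𝟙 M := Injective.comp_factorThru _ _
  have hr' : ∀ i, ComodHom.f φ i ≫ ComodHom.f r i = 𝟙 _ :=
    fun i => congrArg (fun t => ComodHom.f t i) hr
  have mr : ∀ m : ℕ, ∀ j : Fin n, j.1 = m → Mono (ComodHom.f r j) := by
    intro m
    induction m using Nat.strong_induction_on with
    | _ m ih =>
    intro j hj
    apply Preadditive.mono_of_cancel_zero
    intro Z x hx
    have hxd : ∀ ⦃i : Fin n⦄ (h : i < j), x ≫ N.d h = 0 := fun i h => by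
      haveI := ih i.1 (by have := Fin.lt_def.1 h; omega) i rfl
      haveI := hlex h
      rw [← cancel_mono ((F h).map (ComodHom.f r i)), Category.assoc, ← hom_comm r h,
        ← Category.assoc, hx, zero_comp, zero_comp]
    let x' : Z ⟶ E j := x ≫ ε j
    let w : Z ⟶ N.X j := (x' ≫ M.primι j) ≫ ComodHom.f φ j
    have hw : x - w = 0 := by
      apply cofree_unique hadd cofree adj E
      · intro i h
        change (x - w) ≫ N.d h = 0
        rw [Preadditive.sub_comp, hxd h]
        simp only [w, Category.assoc]
        rw [hom_comm φ h, ← Category.assoc (M.primι j), primι_d, zero_comp, comp_zero, sub_zero]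
      · change (x - w) ≫ ε j = 0
        rw [Preadditive.sub_comp]
        simp only [w, Category.assoc]
        rw [hφ, hρ]
        exact sub_eq_zero.2 (Category.comp_id _).symm
    have hxw : x = w := sub_eq_zero.1 hw
    have h4 : x' ≫ M.primι j = 0 := by
      have h5 : w ≫ ComodHom.f r j = 0 := by rw [← hxw, hx]
      simp only [w] at h5
      rwa [Category.assoc, hr', Category.comp_id] at h5
    rw [hxw]
    simp only [w]
    rw [h4, zero_comp]
  haveI : Mono r := mono_of r (fun i => mr i.1 i rfl)
  exact ⟨⟨φ, r, hr, by rw [← cancel_mono r, Category.assoc, hr, Category.comp_id,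
    Category.id_comp]⟩⟩

/-! ### The tail quotient -/

open Classical in
/-- Identity below `i`, zero from `i` on. -/
noncomputable def cut (M : Comod F δ) (i k : Fin n) : M.X k ⟶ M.X k :=
  if k < i then 𝟙 _ else 0

noncomputable def tailπ (M : Comod F δ) (i k : Fin n) : M.X k ⟶ cokernel (M.cut i k) :=
  cokernel.π _

instance (M : Comod F δ) (i k : Fin n) : Epi (M.tailπ i k) := by
  unfold tailπ; infer_instance

theorem tailπ_zero (M : Comod F δ) {i k : Fin n} (h : k < i) : M.tailπ i k = 0 := by
  have h1 : M.cut i k ≫ M.tailπ i k = 0 := cokernel.condition _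
  have h2 : M.cut i k = 𝟙 _ := if_pos h
  have h3 : ∀ f : M.X k ⟶ M.X k, f = 𝟙 _ → f ≫ M.tailπ i k = 0 → M.tailπ i k = 0 := by
    rintro f rfl h4; rwa [Category.id_comp] at h4
  exact h3 _ h2 h1

theorem tailπ_iso (M : Comod F δ) {i k : Fin n} (h : ¬ k < i) : IsIso (M.tailπ i k) := by
  have : M.cut i k = 0 := if_neg h
  have h2 : ∀ f : M.X k ⟶ M.X k, f = 0 → IsIso (cokernel.π f) := by
    rintro f rfl; infer_instance
  exact h2 _ this

theorem cut_comp (hadd : ∀ ⦃i j : Fin n⦄ (h : i < j), (F h).Additive)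
    (M : Comod F δ) (i : Fin n) {k l : Fin n} (h : k < l) :
    M.cut i l ≫ M.d h ≫ (F h).map (M.tailπ i k) = 0 := by
  by_cases hl : l < i
  · rw [M.tailπ_zero (h.trans hl), (F h).map_zero, comp_zero, comp_zero]
  · have : M.cut i l = 0 := if_neg hl
    rw [this, zero_comp]

/-- The tail quotient `(0, …, 0, X_i, …, X_n)`. -/
noncomputable def tail (hadd : ∀ ⦃i j : Fin n⦄ (h : i < j), (F h).Additive)
    (M : Comod F δ) (i : Fin n) : Comod F δ where
  X := fun k => cokernel (M.cut i k)
  d := fun {k l} h => cokernel.desc _ (M.d h ≫ (F h).map (M.tailπ i k)) (M.cut_comp hadd i h)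
  compat := fun {k l m} h₁ h₂ => by
    rw [← cancel_epi (cokernel.π (M.cut i m)), cokernel.π_desc_assoc, cokernel.π_desc_assoc,
      Category.assoc, ← Functor.map_comp]
    have h3 : M.tailπ i l ≫ cokernel.desc (M.cut i l) (M.d h₁ ≫ (F h₁).map (M.tailπ i k))
        (M.cut_comp hadd i h₁)
      = M.d h₁ ≫ (F h₁).map (M.tailπ i k) := cokernel.π_desc _ _ _
    rw [h3, Functor.map_comp, ← Category.assoc, M.compat, Category.assoc, Category.assoc,
      NatTrans.naturality]
    rfl

noncomputable def toTail (hadd : ∀ ⦃i j : Fin n⦄ (h : i < j), (F h).Additive)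
    (M : Comod F δ) (i : Fin n) : M ⟶ M.tail hadd i :=
  ComodHom.mk (fun k => M.tailπ i k) (fun h => cokernel.π_desc _ _ _)

theorem tail_isZero (hadd : ∀ ⦃i j : Fin n⦄ (h : i < j), (F h).Additive)
    (M : Comod F δ) {i k : Fin n} (h : k < i) : IsZero ((M.tail hadd i).X k) :=
  have h1 : IsZero (cokernel (M.cut i k)) :=
    IsZero.of_epi_eq_zero (M.tailπ i k) (M.tailπ_zero h)
  h1

/-! ### The coinduced comodule -/

section coind

variable (N : Comod F δ) (i : Fin n)

open Classical in
noncomputable def gX (k : Fin n) : A k := if h : i < k then (F h).obj (N.X i) else N.X k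

noncomputable def gA {k : Fin n} (h : i < k) : N.gX i k ≅ (F h).obj (N.X i) :=
  eqToIso (dif_pos h)

noncomputable def gB {k : Fin n} (h : ¬ i < k) : N.gX i k ≅ N.X k :=
  eqToIso (dif_neg h)

open Classical in
noncomputable def gd {k l : Fin n} (h : k < l) : N.gX i l ⟶ (F h).obj (N.gX i k) :=
  if h1 : i < k then
    (N.gA i (h1.trans h)).hom ≫ (δ h1 h).app (N.X i) ≫ (F h).map (N.gA i h1).inv
  else if h2 : i = k then by
    subst h2
    exact (N.gA i h).hom ≫ (F h).map (N.gB i h1).inv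
  else 0

theorem gd_lt {k l : Fin n} (h1 : i < k) (h : k < l) : N.gd i h =
    (N.gA i (h1.trans h)).hom ≫ (δ h1 h).app (N.X i) ≫ (F h).map (N.gA i h1).inv :=
  dif_pos h1

theorem gd_eq {l : Fin n} (h : i < l) : N.gd i h =
    (N.gA i h).hom ≫ (F h).map (N.gB i (lt_irrefl i)).inv := by
  unfold gd
  rw [dif_neg (lt_irrefl i), dif_pos rfl]

theorem gX_isZero (hN : ∀ k, k < i → IsZero (N.X k)) {k : Fin n} (h : k < i) :
    IsZero (N.gX i k) :=
  (hN k h).of_iso (N.gB i (not_lt_of_gt h))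

theorem isZero_map (hadd : ∀ ⦃i j : Fin n⦄ (h : i < j), (F h).Additive)
    {i j : Fin n} (h : i < j) {X : A i} (hX : IsZero X) : IsZero ((F h).obj X) := by
  haveI := hadd h
  exact (F h).map_isZero hX

noncomputable def coind
    (hδ : ∀ ⦃i k l j : Fin n⦄ (h₁ : i < k) (h₂ : k < l) (h₃ : l < j) (X : A i),
      (δ h₁ (h₂.trans h₃)).app X ≫ (δ h₂ h₃).app ((F h₁).obj X) =
        (δ (h₁.trans h₂) h₃).app X ≫ (F h₃).map ((δ h₁ h₂).app X))
    (hadd : ∀ ⦃i j : Fin n⦄ (h : i < j), (F h).Additive)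
    (hN : ∀ k, k < i → IsZero (N.X k)) : Comod F δ where
  X := N.gX i
  d := fun h => N.gd i h
  compat := fun {k l m} h₁ h₂ => by
    rcases lt_trichotomy i k with h | h | h
    · rw [N.gd_lt i (h.trans h₁) h₂, N.gd_lt i h h₁, N.gd_lt i h (h₁.trans h₂)]
      have e1 := hδ h h₁ h₂ (N.X i)
      have e2 := (δ h₁ h₂).naturality (N.gA i h).inv
      simp only [Category.assoc, Functor.comp_map] at e2 ⊢
      rw [e2, ← Functor.map_comp]
      simp only [Iso.inv_hom_id_assoc]
      rw [Functor.map_comp]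
      simp only [← Category.assoc]
      congr 1
      simp only [Category.assoc]
      rw [e1]
    · subst h
      rw [N.gd_lt i h₁ h₂, N.gd_eq i h₁, N.gd_eq i (h₁.trans h₂)]
      have e2 := (δ h₁ h₂).naturality (N.gB i (lt_irrefl i)).inv
      simp only [Category.assoc, Functor.comp_map] at e2 ⊢
      rw [e2, ← Functor.map_comp]
      simp only [Iso.inv_hom_id_assoc]
    · exact (isZero_map hadd h₂ (isZero_map hadd h₁ (N.gX_isZero i hN h))).eq_of_tgt _ _

open Classical in
/-- Zero at `i`, the identity elsewhere. -/
noncomputable def pt (k : Fin n) : N.X k ⟶ N.X k := if k = i then 0 else 𝟙 _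

theorem ptι_zero {k : Fin n} (h : k ≠ i) : kernel.ι (N.pt i k) = 0 := by
  have h1 : kernel.ι (N.pt i k) ≫ N.pt i k = 0 := kernel.condition _
  have h2 : N.pt i k = 𝟙 _ := if_neg h
  have h3 : ∀ f : N.X k ⟶ N.X k, f = 𝟙 _ → kernel.ι f = 0 := by
    rintro f rfl; simpa using kernel.condition (𝟙 (N.X k))
  exact h3 _ h2

theorem ptι_iso : IsIso (kernel.ι (N.pt i i)) := by
  have h2 : N.pt i i = 0 := if_pos rfl
  have h3 : ∀ f : N.X i ⟶ N.X i, f = 0 → IsIso (kernel.ι f) := by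
    rintro f rfl; infer_instance
  exact h3 _ h2

open Classical in
noncomputable def ptG (k : Fin n) : kernel (N.pt i k) ⟶ N.gX i k :=
  if h : i < k then 0 else kernel.ι (N.pt i k) ≫ (N.gB i h).inv

theorem isSplitEpi_of
    (hδ : ∀ ⦃i k l j : Fin n⦄ (h₁ : i < k) (h₂ : k < l) (h₃ : l < j) (X : A i),
      (δ h₁ (h₂.trans h₃)).app X ≫ (δ h₂ h₃).app ((F h₁).obj X) =
        (δ (h₁.trans h₂) h₃).app X ≫ (F h₃).map ((δ h₁ h₂).app X))
    (hadd : ∀ ⦃i j : Fin n⦄ (h : i < j), (F h).Additive)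
    (hN : ∀ k, k < i → IsZero (N.X k)) (hI : Injective N) {j : Fin n} (h : i < j) :
    IsSplitEpi (N.d h) := by
  let Y : ∀ k, A k := fun k => kernel (N.pt i k)
  let a : (triv hadd Y : Comod F δ) ⟶ N := trivDesc hadd Y N (fun k => kernel.ι (N.pt i k))
    (fun k l hkl => by
      by_cases hl : l = i
      · exact (isZero_map hadd hkl (hN k (hl ▸ hkl))).eq_of_tgt _ _
      · rw [N.ptι_zero i hl, zero_comp])
  let b : (triv hadd Y : Comod F δ) ⟶ N.coind i hδ hadd hN :=
    trivDesc hadd Y _ (fun k => N.ptG i k) (fun k l hkl => by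
      by_cases hl : i < l
      · have : N.ptG i l = 0 := dif_pos hl
        rw [this]; exact zero_comp
      · exact (isZero_map hadd hkl (N.gX_isZero i hN
          (lt_of_lt_of_le hkl (not_lt.1 hl)))).eq_of_tgt _ _)
  have hb : N.ptG i i = kernel.ι (N.pt i i) ≫ (N.gB i (lt_irrefl i)).inv := dif_neg (lt_irrefl i)
  haveI := N.ptι_iso i
  haveI : Mono b := mono_of b (fun k => by
    change Mono (N.ptG i k)
    by_cases hk : k = i
    · subst hk
      rw [hb]; infer_instance
    · have : IsZero (kernel (N.pt i k)) := IsZero.of_mono_eq_zero _ (N.ptι_zero i hk)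
      exact ⟨fun _ _ _ => this.eq_of_tgt _ _⟩)
  let s : N.coind i hδ hadd hN ⟶ N := Injective.factorThru a b
  have hs : b ≫ s = a := Injective.comp_factorThru a b
  let si : N.gX i i ⟶ N.X i := ComodHom.f s i
  let sj : N.gX i j ⟶ N.X j := ComodHom.f s j
  have h1 : N.ptG i i ≫ si = kernel.ι (N.pt i i) := congrArg (fun t => ComodHom.f t i) hs
  have h2 : (N.gB i (lt_irrefl i)).inv ≫ si = 𝟙 _ := by
    rw [← cancel_epi (kernel.ι (N.pt i i)), ← Category.assoc, ← hb, h1, Category.comp_id]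
  have h3 : sj ≫ N.d h = N.gd i h ≫ (F h).map si := hom_comm s h
  refine ⟨⟨⟨(N.gA i h).inv ≫ sj, ?_⟩⟩⟩
  rw [Category.assoc, h3, gd_eq, Category.assoc, ← Functor.map_comp, h2, CategoryTheory.Functor.map_id,
    Category.comp_id, Iso.inv_hom_id]

end coind

theorem isSplitEpi_d
    (hδ : ∀ ⦃i k l j : Fin n⦄ (h₁ : i < k) (h₂ : k < l) (h₃ : l < j) (X : A i),
      (δ h₁ (h₂.trans h₃)).app X ≫ (δ h₂ h₃).app ((F h₁).obj X) =
        (δ (h₁.trans h₂) h₃).app X ≫ (F h₃).map ((δ h₁ h₂).app X))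
    (hadd : ∀ ⦃i j : Fin n⦄ (h : i < j), (F h).Additive)
    (hH : Hereditary (Comod F δ)) (M : Comod F δ) (hM : Injective M) {i j : Fin n} (h : i < j) :
    IsSplitEpi (M.d h) := by
  have hT : Injective (M.tail hadd i) := hH (M.toTail hadd i)
    (epi_of _ (fun k => inferInstanceAs (Epi (M.tailπ i k)))) hM
  have hs := (M.tail hadd i).isSplitEpi_of i hδ hadd (fun k hk => M.tail_isZero hadd hk) hT h
  haveI := M.tailπ_iso (lt_irrefl i)
  haveI := M.tailπ_iso (not_lt_of_gt h)
  obtain ⟨⟨s, hs⟩⟩ := hs.exists_splitEpi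
  have h1 : M.tailπ i j ≫ (M.tail hadd i).d h = M.d h ≫ (F h).map (M.tailπ i i) :=
    hom_comm (M.toTail hadd i) h
  let s' : (F h).obj (cokernel (M.cut i i)) ⟶ cokernel (M.cut i j) := s
  have h2 : s' ≫ inv (M.tailπ i j) ≫ M.d h ≫ (F h).map (M.tailπ i i) = 𝟙 _ := by
    rw [← h1]
    exact (congrArg (s' ≫ ·) (IsIso.inv_hom_id_assoc (M.tailπ i j) _)).trans hs
  refine ⟨⟨⟨(F h).map (M.tailπ i i) ≫ s' ≫ inv (M.tailπ i j), ?_⟩⟩⟩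
  rw [← cancel_mono ((F h).map (M.tailπ i i))]
  simp only [Category.assoc]
  rw [h2, Category.comp_id, Category.id_comp]

end Comod

theorem stmt_12
    -- coassociativity of the comonad data:
    (hδ : ∀ ⦃i k l j : Fin n⦄ (h₁ : i < k) (h₂ : k < l) (h₃ : l < j) (X : A i),
      (δ h₁ (h₂.trans h₃)).app X ≫ (δ h₂ h₃).app ((F h₁).obj X) =
        (δ (h₁.trans h₂) h₃).app X ≫ (F h₃).map ((δ h₁ h₂).app X))
    -- the functors `F_{ij}` are additive and left exact:
    (hadd : ∀ ⦃i j : Fin n⦄ (h : i < j), (F h).Additive)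
    (hlex : ∀ ⦃i j : Fin n⦄ (h : i < j), PreservesFiniteLimits (F h))
    -- the cofree functor, right adjoint to the forgetful functor:
    (cofree : (∀ i, A i) ⥤ Comod F δ)
    (adj : forgetComod F δ ⊣ cofree)
    (hH : Hereditary (Comod F δ))
    (M : Comod F δ) (hM : Injective M) :
    (∃ E : ∀ i, A i, (∀ i, Injective (E i)) ∧ Nonempty (M ≅ cofree.obj E)) ∧
      (∀ ⦃i j : Fin n⦄ (h : i < j), IsSplitEpi (M.d h)) := by
  exact ⟨⟨M.prim, M.prim_injective hadd hM, M.iso_cofree hadd hlex cofree adj hM⟩,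
    fun i j h => M.isSplitEpi_d hδ hadd hH hM h⟩
end

section
/- Assume the comodule category A_F of the normal triangular matrix comonad F is hereditary. Then for all indices i < j < k and every injective object E_i of A_i, the morphism δ^{ijk}_{E_i} : F_{ik}(E_i) ⟶ F_{jk}(F_{ij}(E_i)) is a split epimorphism. -/
/-!
STATEMENT 13: If the category of comodules over a normal triangular matrix comonad
`F` on `A₁ × ⋯ × Aₙ` is hereditary, then for all `i < j < k` and every injective
object `E` of `A_i`, the component `δ^{ijk}_E : F_{ik}(E) ⟶ F_{jk}(F_{ij}(E))` is a
split epimorphism.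
-/

open CategoryTheory Limits

universe v u

variable {n : ℕ} {A : Fin n → Type u} [∀ i, Category.{v} (A i)]
  [∀ i, Abelian (A i)] [∀ i, EnoughInjectives (A i)]
variable (F : ∀ ⦃i j : Fin n⦄, i < j → (A i ⥤ A j))
variable (δ : ∀ ⦃i k j : Fin n⦄ (h₁ : i < k) (h₂ : k < j), F (h₁.trans h₂) ⟶ F h₁ ⋙ F h₂)

theorem aux_family {i : Fin n} {X Y : ∀ l, A l} (φ : X i ⟶ Y i)
    (ψ : ∀ l, i < l → (X l ⟶ Y l)) :
    ∃ f : ∀ l, X l ⟶ Y l, f i = φ ∧ ∀ l h, f l = ψ l h := by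
  classical
  refine ⟨fun l => if e : l = i then by subst e; exact φ else
    if h : i < l then ψ l h else 0, ?_, ?_⟩
  · simp
  · intro l h
    simp [h, h.ne']

theorem aux_obj_zero {C D : Type*} [Category C] [Category D] [Abelian C] [Abelian D]
    (G : C ⥤ D) (hG : G.Additive) {X : C} (h : IsZero X) : IsZero (G.obj X) := by
  rw [IsZero.iff_id_eq_zero] at h ⊢
  rw [← G.map_id, h, G.map_zero]

/-- the property of being cofree at `i` -/
def CofreeAt (i : Fin n) (C : Comod F δ) : Prop :=
  (∀ l, l < i → IsZero (C.X l)) ∧ ∀ l (h : i < l), IsIso (C.d h)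

theorem aux_cofree_lift (hadd : ∀ ⦃i j : Fin n⦄ (h : i < j), (F h).Additive)
    {i : Fin n} {C : Comod F δ} (hC : CofreeAt F δ i C) (N : Comod F δ)
    (φ : N.X i ⟶ C.X i) : ∃ f : N ⟶ C, ComodHom.f f i = φ := by
  obtain ⟨hz, hi⟩ := hC
  obtain ⟨f, hf, hf'⟩ := aux_family (i := i) (X := N.X) (Y := C.X) φ
    (fun l h => haveI := hi l h; N.d h ≫ (F h).map φ ≫ inv (C.d h))
  refine ⟨⟨f, ?_⟩, hf⟩
  intro a b h
  rcases lt_trichotomy a i with ha | ha | ha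
  · exact (aux_obj_zero _ (hadd h) (hz a ha)).eq_of_tgt _ _
  · subst ha
    have := hi b h
    rw [hf' b h, hf]
    simp
  · have h1 := hi a ha
    have h2 := hi b (ha.trans h)
    rw [hf' a ha, hf' b (ha.trans h), ← cancel_mono ((F h).map (C.d ha))]
    simp only [Category.assoc, ← Functor.map_comp, IsIso.inv_hom_id, Category.comp_id]
    rw [C.compat ha h, IsIso.inv_hom_id_assoc, Functor.map_comp, ← Category.assoc (N.d h),
      N.compat ha h, Category.assoc]
    congr 1
    exact ((δ ha h).naturality φ)

theorem aux_cofree_uniq (hadd : ∀ ⦃i j : Fin n⦄ (h : i < j), (F h).Additive)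
    {i : Fin n} {C : Comod F δ} (hC : CofreeAt F δ i C) (N : Comod F δ)
    (f g : N ⟶ C) (h : ComodHom.f f i = ComodHom.f g i) : f = g := by
  obtain ⟨hz, hi⟩ := hC
  apply ComodHom.ext
  funext l
  rcases lt_trichotomy l i with ha | ha | ha
  · exact (hz l ha).eq_of_tgt _ _
  · subst ha; exact h
  · have := hi l ha
    rw [← cancel_mono (C.d ha), ComodHom.comm, ComodHom.comm, h]

open ZeroObject in
theorem aux_cofree_exists
    (hδ : ∀ ⦃i k l j : Fin n⦄ (h₁ : i < k) (h₂ : k < l) (h₃ : l < j) (X : A i),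
      (δ h₁ (h₂.trans h₃)).app X ≫ (δ h₂ h₃).app ((F h₁).obj X) =
        (δ (h₁.trans h₂) h₃).app X ≫ (F h₃).map ((δ h₁ h₂).app X))
    (hadd : ∀ ⦃i j : Fin n⦄ (h : i < j), (F h).Additive) (i : Fin n) (E : A i) :
    ∃ C : Comod F δ, CofreeAt F δ i C ∧ Nonempty (C.X i ≅ E) := by
  classical
  obtain ⟨X, ⟨v⟩, hu, hz⟩ : ∃ X : ∀ l, A l, Nonempty (X i ≅ E) ∧
      (∀ l (h : i < l), Nonempty (X l ≅ (F h).obj E)) ∧ ∀ l, l < i → IsZero (X l) := by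
    refine ⟨fun l => if e : l = i then by subst e; exact E else
      if h : i < l then (F h).obj E else 0, ⟨eqToIso (by simp)⟩,
      fun l h => ⟨eqToIso (by simp [h, h.ne'])⟩, fun l h => ?_⟩
    simp only [h.ne, h.not_gt, dite_false]
    exact isZero_zero _
  let u := fun l h => (hu l h).some
  obtain ⟨d, hd, hd'⟩ : ∃ d : ∀ (a b : Fin n) (h : a < b), X b ⟶ (F h).obj (X a),
      (∀ b h, d i b h = (u b h).hom ≫ (F h).map v.inv) ∧
      (∀ a b (h : i < a) (h' : a < b), d a b h' =
        (u b (h.trans h')).hom ≫ (δ h h').app E ≫ (F h').map (u a h).inv) := by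
    refine ⟨fun a b h' => if e : a = i then by
        subst e; exact (u b h').hom ≫ (F h').map v.inv else
      if h : i < a then
        (u b (h.trans h')).hom ≫ (δ h h').app E ≫ (F h').map (u a h).inv else 0, ?_, ?_⟩
    · intro b h
      simp [u]
    · intro a b h h'
      simp [h, h.ne']
  refine ⟨⟨X, fun h => d _ _ h, ?_⟩, ⟨hz, ?_⟩, ⟨v⟩⟩
  · intro a k b h1 h2
    rcases lt_trichotomy a i with ha | ha | ha
    · exact (aux_obj_zero _ (hadd h2) (aux_obj_zero _ (hadd h1) (hz a ha))).eq_of_tgt _ _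
    · subst ha
      rw [hd, hd, hd' _ _ h1 h2]
      simp only [Category.assoc, ← Functor.map_comp, Iso.inv_hom_id_assoc]
      congr 1
      exact ((δ h1 h2).naturality v.inv).symm
    · rw [hd' _ _ ha, hd' _ _ ha, hd' _ _ (ha.trans h1) h2]
      simp only [Category.assoc, ← Functor.map_comp, Iso.inv_hom_id_assoc]
      have := (δ h1 h2).naturality (u a ha).inv
      rw [this, reassoc_of% hδ ha h1 h2 E]
      simp
  · intro l h
    change IsIso (d i l h)
    rw [hd]
    infer_instance

theorem aux_mono (hadd : ∀ ⦃i j : Fin n⦄ (h : i < j), (F h).Additive)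
    (hlex : ∀ ⦃i j : Fin n⦄ (h : i < j), PreservesFiniteLimits (F h))
    {M N : Comod F δ} (m : M ⟶ N) [hm : Mono m] (i : Fin n) : Mono (ComodHom.f m i) := by
  have hM : ∀ {a b : Fin n} (h : a < b), Mono ((F h).map (kernel.ι (ComodHom.f m a))) := by
    intro a b h
    have := hlex h
    infer_instance
  have key : ∀ (a b : Fin n) (h : a < b), ∃ d : kernel (ComodHom.f m b) ⟶
      (F h).obj (kernel (ComodHom.f m a)),
      d ≫ (F h).map (kernel.ι (ComodHom.f m a)) = kernel.ι (ComodHom.f m b) ≫ M.d h := by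
    intro a b h
    have := hlex h
    have := hadd h
    have hl := isLimitForkMapOfIsLimit' (F h) (kernel.condition (ComodHom.f m a))
      (kernelIsKernel (ComodHom.f m a))
    obtain ⟨d, hd⟩ := KernelFork.IsLimit.lift' hl (kernel.ι (ComodHom.f m b) ≫ M.d h) (by
      rw [Category.assoc, ← ComodHom.comm, kernel.condition_assoc, zero_comp])
    exact ⟨d, hd⟩
  choose d hd using key
  let K : Comod F δ := ⟨fun a => kernel (ComodHom.f m a), fun {a b} h => d a b h, by
    intro a k b h1 h2
    have := hlex h2
    have := hM h1
    rw [← cancel_mono ((F h2).map ((F h1).map (kernel.ι (ComodHom.f m a))))]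
    have hn := (δ h1 h2).naturality (kernel.ι (ComodHom.f m a))
    simp only [Functor.comp_map] at hn
    rw [Category.assoc, Category.assoc, ← hn, ← Functor.map_comp, hd, Functor.map_comp,
      reassoc_of% hd k b h2, reassoc_of% hd a b (h1.trans h2), M.compat]⟩
  let z : K ⟶ M := ⟨fun a => 0, fun h => by have := hadd h; simp⟩
  let ι : K ⟶ M := ⟨fun a => kernel.ι (ComodHom.f m a), fun h => (hd _ _ h).symm⟩
  have e : ι = z := by
    rw [← cancel_mono m]
    apply ComodHom.ext
    funext a
    change kernel.ι (ComodHom.f m a) ≫ ComodHom.f m a = 0 ≫ ComodHom.f m a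
    simp
  have e' : kernel.ι (ComodHom.f m i) = 0 := congrArg (fun t => ComodHom.f t i) e
  exact Preadditive.mono_of_kernel_zero e'

theorem aux_cofree_injective (hadd : ∀ ⦃i j : Fin n⦄ (h : i < j), (F h).Additive)
    (hlex : ∀ ⦃i j : Fin n⦄ (h : i < j), PreservesFiniteLimits (F h))
    {i : Fin n} {C : Comod F δ} (hC : CofreeAt F δ i C) (hi : Injective (C.X i)) :
    Injective C := by
  refine ⟨fun {M N} g m hm => ?_⟩
  have := aux_mono F δ hadd hlex m i
  obtain ⟨f, hf⟩ := aux_cofree_lift F δ hadd hC N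
    (Injective.factorThru (ComodHom.f g i) (ComodHom.f m i))
  refine ⟨f, aux_cofree_uniq F δ hadd hC _ _ _ ?_⟩
  change ComodHom.f m i ≫ ComodHom.f f i = _
  rw [hf, Injective.comp_factorThru]

open ZeroObject in
theorem aux_cut (X : ∀ l, A l) (P : Fin n → Prop) :
    ∃ (Y : ∀ l, A l) (p : ∀ l, X l ⟶ Y l) (s : ∀ l, Y l ⟶ X l), (∀ l, s l ≫ p l = 𝟙 _) ∧
      (∀ l, P l → p l ≫ s l = 𝟙 _) ∧ ∀ l, ¬ P l → IsZero (Y l) := by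
  have : ∀ l, ∃ (Y : A l) (p : X l ⟶ Y) (s : Y ⟶ X l), (s ≫ p = 𝟙 _) ∧
      (P l → p ≫ s = 𝟙 _) ∧ (¬ P l → IsZero Y) := by
    intro l
    by_cases h : P l
    · exact ⟨X l, 𝟙 _, 𝟙 _, by simp, by simp, fun h' => (h' h).elim⟩
    · exact ⟨0, 0, 0, (isZero_zero _).eq_of_tgt _ _, fun h' => (h h').elim,
        fun _ => isZero_zero _⟩
  choose Y p s h1 h2 h3 using this
  exact ⟨Y, p, s, h1, h2, h3⟩

theorem aux_quot (hadd : ∀ ⦃i j : Fin n⦄ (h : i < j), (F h).Additive) (M : Comod F δ)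
    (t : Fin n) : ∃ (Q : Comod F δ) (p : M ⟶ Q), Epi p ∧ (∀ l, t ≤ l → IsIso (ComodHom.f p l)) ∧
      ∀ l, l < t → IsZero (Q.X l) := by
  obtain ⟨Y, p, s, h1, h2, h3⟩ := aux_cut M.X (fun l => t ≤ l)
  let Q : Comod F δ := ⟨Y, fun {a b} h => s b ≫ M.d h ≫ (F h).map (p a), by
    intro a k b hak hkb
    by_cases ht : t ≤ k
    · simp only [Category.assoc, ← Functor.map_comp]
      rw [reassoc_of% h2 k ht]
      have hn := (δ hak hkb).naturality (p a)
      rw [hn, Functor.map_comp, reassoc_of% M.compat hak hkb]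
      rfl
    · exact (aux_obj_zero _ (hadd _) (aux_obj_zero _ (hadd _)
        (h3 a (fun h => ht (h.trans hak.le))))).eq_of_tgt _ _⟩
  let π : M ⟶ Q := ⟨p, by
    intro a b h
    by_cases ht : t ≤ b
    · change p b ≫ s b ≫ M.d h ≫ (F h).map (p a) = _
      rw [reassoc_of% h2 b ht]
    · exact (aux_obj_zero _ (hadd _) (h3 a (fun h' => ht (h'.trans h.le)))).eq_of_tgt _ _⟩
  refine ⟨Q, π, ⟨fun {Z} f g hfg => ?_⟩, fun l hl => ⟨s l, h2 l hl, h1 l⟩,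
    fun l hl => h3 l hl.not_ge⟩
  apply ComodHom.ext
  funext l
  have e : p l ≫ ComodHom.f f l = p l ≫ ComodHom.f g l := congrArg (fun t => ComodHom.f t l) hfg
  have := congrArg (fun t => s l ≫ t) e
  simpa [reassoc_of% h1 l] using this

theorem aux_sub (hadd : ∀ ⦃i j : Fin n⦄ (h : i < j), (F h).Additive) (M : Comod F δ)
    (t : Fin n) : ∃ (Q : Comod F δ) (s : Q ⟶ M), Mono s ∧ (∀ l, l ≤ t → IsIso (ComodHom.f s l)) ∧
      ∀ l, t < l → IsZero (Q.X l) := by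
  obtain ⟨Y, p, s, h1, h2, h3⟩ := aux_cut M.X (fun l => l ≤ t)
  let Q : Comod F δ := ⟨Y, fun {a b} h => s b ≫ M.d h ≫ (F h).map (p a), by
    intro a k b hak hkb
    by_cases ht : k ≤ t
    · simp only [Category.assoc, ← Functor.map_comp]
      rw [reassoc_of% h2 k ht]
      have hn := (δ hak hkb).naturality (p a)
      rw [hn, Functor.map_comp, reassoc_of% M.compat hak hkb]
      rfl
    · exact (h3 b (fun h => ht (hkb.le.trans h))).eq_of_src _ _⟩
  let π : Q ⟶ M := ⟨s, by
    intro a b h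
    by_cases ht : a ≤ t
    · change _ = (s b ≫ M.d h ≫ (F h).map (p a)) ≫ _
      simp only [Category.assoc, ← Functor.map_comp]
      rw [h2 a ht]
      simp
    · exact (h3 b (fun h' => ht (h.le.trans h'))).eq_of_src _ _⟩
  refine ⟨Q, π, ⟨fun {Z} f g hfg => ?_⟩, fun l hl => ⟨p l, h1 l, h2 l hl⟩,
    fun l hl => h3 l hl.not_ge⟩
  apply ComodHom.ext
  funext l
  have e : ComodHom.f f l ≫ s l = ComodHom.f g l ≫ s l := congrArg (fun t => ComodHom.f t l) hfg
  have := congrArg (fun t => t ≫ p l) e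
  simp only [Category.assoc, h1 l] at this
  exact (Category.comp_id _).symm.trans (this.trans (Category.comp_id _))

theorem stmt_13
    (hδ : ∀ ⦃i k l j : Fin n⦄ (h₁ : i < k) (h₂ : k < l) (h₃ : l < j) (X : A i),
      (δ h₁ (h₂.trans h₃)).app X ≫ (δ h₂ h₃).app ((F h₁).obj X) =
        (δ (h₁.trans h₂) h₃).app X ≫ (F h₃).map ((δ h₁ h₂).app X))
    (hadd : ∀ ⦃i j : Fin n⦄ (h : i < j), (F h).Additive)
    (hlex : ∀ ⦃i j : Fin n⦄ (h : i < j), PreservesFiniteLimits (F h))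
    (hH : Hereditary (Comod F δ))
    ⦃i j k : Fin n⦄ (hij : i < j) (hjk : j < k)
    (E : A i) (hE : Injective E) :
    IsSplitEpi ((δ hij hjk).app E) := by
  obtain ⟨C, hC, ⟨v⟩⟩ := aux_cofree_exists F δ hδ hadd i E
  have hCi := aux_cofree_injective F δ hadd hlex hC (Injective.of_iso v.symm hE)
  obtain ⟨Q, π, hπ, hπi, hQz⟩ := aux_quot F δ hadd C j
  have hQ : Injective Q := hH π hπ hCi
  obtain ⟨D, hD, ⟨w⟩⟩ := aux_cofree_exists F δ hδ hadd j (Q.X j)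
  obtain ⟨P, s, hs, hsi, hPz⟩ := aux_sub F δ hadd D j
  obtain ⟨f, hf, -⟩ := aux_family (i := j) (X := P.X) (Y := Q.X)
    (ComodHom.f s j ≫ w.hom) (fun _ _ => 0)
  let φ : P ⟶ Q := ⟨f, by
    intro a b h
    by_cases ha : a < j
    · exact (aux_obj_zero _ (hadd _) (hQz a ha)).eq_of_tgt _ _
    · exact (hPz b ((not_lt.1 ha).trans_lt h)).eq_of_src _ _⟩
  obtain ⟨g, hg⟩ := hQ.factors φ s
  have := hsi j le_rfl
  have hgj : ComodHom.f g j = w.hom := by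
    have e : ComodHom.f s j ≫ ComodHom.f g j = f j := congrArg (fun t => ComodHom.f t j) hg
    rwa [hf, cancel_epi] at e
  have hDk := hD.2 k hjk
  have hCk := hC.2 k (hij.trans hjk)
  have hCj := hC.2 j hij
  have hπj := hπi j le_rfl
  have hπk := hπi k hjk.le
  have hgk := ComodHom.comm g hjk
  rw [hgj] at hgk
  have hπc := ComodHom.comm π hjk
  have hcc := C.compat hij hjk
  have hn := (δ hij hjk).naturality v.hom
  simp only [Functor.comp_map] at hn
  have e1 : C.d hjk = ComodHom.f π k ≫ Q.d hjk ≫ (F hjk).map (inv (ComodHom.f π j)) := by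
    rw [reassoc_of% hπc, ← Functor.map_comp, IsIso.hom_inv_id]
    simp
  have e2 : (δ hij hjk).app E = (F (hij.trans hjk)).map v.inv ≫ inv (C.d (hij.trans hjk)) ≫
      C.d hjk ≫ (F hjk).map (C.d hij) ≫ (F hjk).map ((F hij).map v.hom) := by
    rw [reassoc_of% hcc, IsIso.inv_hom_id_assoc, ← hn, ← Functor.map_comp_assoc,
      Iso.inv_hom_id]
    simp
  have q1 : IsSplitEpi (Q.d hjk) := ⟨⟨⟨inv (D.d hjk ≫ (F hjk).map w.hom) ≫ ComodHom.f g k, by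
    rw [Category.assoc, hgk, IsIso.inv_hom_id]⟩⟩⟩
  rw [e2, e1]
  simp only [Category.assoc]
  infer_instance
end

section
/- Let n ≥ 2. If the comodule category A_F of the normal triangular matrix comonad F is hereditary, then for all i < j and every epimorphism p : E_i ⟶ E_i' between injective objects of A_i, the morphism F_{ij}(p) is a split epimorphism. -/
/-!
STATEMENT 15: Let `n ≥ 2`. If the category of comodules over a normal triangular
matrix comonad `F` on `A₁ × ⋯ × Aₙ` is hereditary, then for all `i < j` and every
epimorphism `p : E ⟶ E` between injective objects of `A_i`, the morphism
`F_{ij}(p)` is a split epimorphism.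
-/

open CategoryTheory Limits

universe v u

variable {n : ℕ} {A : Fin n → Type u} [∀ i, Category.{v} (A i)]
  [∀ i, Abelian (A i)] [∀ i, EnoughInjectives (A i)]
variable (F : ∀ ⦃i j : Fin n⦄, i < j → (A i ⥤ A j))
variable (δ : ∀ ⦃i k j : Fin n⦄ (h₁ : i < k) (h₂ : k < j), F (h₁.trans h₂) ⟶ F h₁ ⋙ F h₂)

section Helpers

set_option linter.unusedSectionVars false
set_option linter.unusedSimpArgs false

open Classical in
/-- Piecewise definition of a family: prescribed above `i`, at `i`, default elsewhere. -/
noncomputable def pw {T : Fin n → Sort*} (i : Fin n) (t : ∀ k, T k)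
    (u : ∀ k, i < k → T k) (u0 : T i) (k : Fin n) : T k :=
  if h : i < k then u k h else if h' : i = k then h' ▸ u0 else t k

theorem pw_gt {T : Fin n → Sort*} (i : Fin n) (t : ∀ k, T k)
    (u : ∀ k, i < k → T k) (u0 : T i) (k : Fin n) (h : i < k) : pw i t u u0 k = u k h := by
  simp [pw, h]

theorem pw_eq {T : Fin n → Sort*} (i : Fin n) (t : ∀ k, T k)
    (u : ∀ k, i < k → T k) (u0 : T i) : pw i t u u0 i = u0 := by
  simp [pw]

theorem pw_lt {T : Fin n → Sort*} (i : Fin n) (t : ∀ k, T k)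
    (u : ∀ k, i < k → T k) (u0 : T i) (k : Fin n) (h : k < i) : pw i t u u0 k = t k := by
  simp [pw, h.not_gt, h.ne']

variable {i : Fin n}

open ZeroObject in
noncomputable def pY (E E' : A i) (k : Fin n) : A k :=
  pw (T := A) i (fun _ => 0) (fun _ h => (F h).obj E) E' k

noncomputable def pe (E E' : A i) {k : Fin n} (h : i < k) : pY F E E' k ≅ (F h).obj E :=
  eqToIso (pw_gt _ _ _ _ _ h)

noncomputable def pe0 (E E' : A i) : pY F E E' i ≅ E' :=
  eqToIso (pw_eq _ _ _ _)

theorem pz (E E' : A i) {k : Fin n} (h : k < i) : IsZero (pY F E E' k) := by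
  unfold pY
  rw [pw_lt _ _ _ _ _ h]
  exact isZero_zero _

noncomputable def pd {E E' : A i} (p : E ⟶ E') : ∀ (k l : Fin n) (h : k < l),
    pY F E E' l ⟶ (F h).obj (pY F E E' k) :=
  pw (T := fun k => ∀ (l : Fin n) (h : k < l), pY F E E' l ⟶ (F h).obj (pY F E E' k)) i
    (fun _ _ _ => 0)
    (fun _ hk _ h => (pe F E E' (hk.trans h)).hom ≫ (δ hk h).app E ≫ (F h).map (pe F E E' hk).inv)
    (fun _ h => (pe F E E' h).hom ≫ (F h).map (p ≫ (pe0 F E E').inv))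

theorem pd_gt {E E' : A i} (p : E ⟶ E') {k l : Fin n} (hk : i < k) (h : k < l) :
    pd F δ p k l h =
      (pe F E E' (hk.trans h)).hom ≫ (δ hk h).app E ≫ (F h).map (pe F E E' hk).inv := by
  unfold pd; rw [pw_gt _ _ _ _ _ hk]

theorem pd_eq {E E' : A i} (p : E ⟶ E') {l : Fin n} (h : i < l) :
    pd F δ p i l h = (pe F E E' h).hom ≫ (F h).map (p ≫ (pe0 F E E').inv) := by
  unfold pd; rw [pw_eq]

variable (hadd : ∀ ⦃i j : Fin n⦄ (h : i < j), (F h).Additive)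

theorem F_isZero (hadd : ∀ ⦃i j : Fin n⦄ (h : i < j), (F h).Additive)
    {k l : Fin n} (h : k < l) {X : A k} (hX : IsZero X) : IsZero ((F h).obj X) := by
  have := hadd h
  exact (F h).map_isZero hX

/-- the comodule attached to an arrow `p : E ⟶ E'` of `A i`. -/
noncomputable def pC
    (hδ : ∀ ⦃i k l j : Fin n⦄ (h₁ : i < k) (h₂ : k < l) (h₃ : l < j) (X : A i),
      (δ h₁ (h₂.trans h₃)).app X ≫ (δ h₂ h₃).app ((F h₁).obj X) =
        (δ (h₁.trans h₂) h₃).app X ≫ (F h₃).map ((δ h₁ h₂).app X))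
    (hadd : ∀ ⦃i j : Fin n⦄ (h : i < j), (F h).Additive)
    {E E' : A i} (p : E ⟶ E') : Comod F δ where
  X := pY F E E'
  d {k l} h := pd F δ p k l h
  compat {k l m} h₁ h₂ := by
    rcases lt_trichotomy i k with hk | rfl | hk
    · rw [pd_gt F δ p (hk.trans h₁), pd_gt F δ p hk, pd_gt F δ p hk]
      simp only [Category.assoc, Functor.map_comp, Iso.cancel_iso_hom_left]
      rw [← Functor.map_comp_assoc, Iso.inv_hom_id, CategoryTheory.Functor.map_id, Category.id_comp]
      rw [← reassoc_of% hδ]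
      erw [(δ h₁ h₂).naturality]
      rfl
    · rw [pd_gt F δ p h₁, pd_eq, pd_eq]
      simp only [Category.assoc, Functor.map_comp, Iso.cancel_iso_hom_left]
      rw [← Functor.map_comp_assoc, Iso.inv_hom_id, CategoryTheory.Functor.map_id, Category.id_comp]
      simp
    · exact (F_isZero F hadd _ (F_isZero F hadd _ (pz F E E' hk))).eq_of_tgt _ _

/-- maps out of a comodule-like family given by components. -/
noncomputable def pm {X Y : ∀ k, A k} (u : ∀ k, i < k → (X k ⟶ Y k)) (u0 : X i ⟶ Y i) :
    ∀ k, X k ⟶ Y k :=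
  pw (T := fun k => X k ⟶ Y k) i (fun _ => 0) u u0

theorem pm_gt {X Y : ∀ k, A k} (u : ∀ k, i < k → (X k ⟶ Y k)) (u0 : X i ⟶ Y i)
    {k : Fin n} (h : i < k) : pm u u0 k = u k h := pw_gt _ _ _ _ _ h

theorem pm_eq {X Y : ∀ k, A k} (u : ∀ k, i < k → (X k ⟶ Y k)) (u0 : X i ⟶ Y i) :
    pm u u0 i = u0 := pw_eq _ _ _ _

variable (hδ : ∀ ⦃i k l j : Fin n⦄ (h₁ : i < k) (h₂ : k < l) (h₃ : l < j) (X : A i),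
      (δ h₁ (h₂.trans h₃)).app X ≫ (δ h₂ h₃).app ((F h₁).obj X) =
        (δ (h₁.trans h₂) h₃).app X ≫ (F h₃).map ((δ h₁ h₂).app X))

noncomputable def pMapf {E E' G G' : A i} (a : E ⟶ G) (b : E' ⟶ G') :
    ∀ k, pY F E E' k ⟶ pY F G G' k :=
  pm (X := pY F E E') (Y := pY F G G')
      (fun _ h => (pe F E E' h).hom ≫ (F h).map a ≫ (pe F G G' h).inv)
      ((pe0 F E E').hom ≫ b ≫ (pe0 F G G').inv)

theorem pMapf_gt {E E' G G' : A i} (a : E ⟶ G) (b : E' ⟶ G') {k : Fin n} (h : i < k) :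
    pMapf F a b k = (pe F E E' h).hom ≫ (F h).map a ≫ (pe F G G' h).inv := pm_gt _ _ h

theorem pMapf_eq {E E' G G' : A i} (a : E ⟶ G) (b : E' ⟶ G') :
    pMapf F a b i = (pe0 F E E').hom ≫ b ≫ (pe0 F G G').inv := pm_eq _ _

theorem pMapf_comm (hadd : ∀ ⦃i j : Fin n⦄ (h : i < j), (F h).Additive)
    {E E' G G' : A i} (p : E ⟶ E') (q : G ⟶ G') (a : E ⟶ G) (b : E' ⟶ G')
    (w : p ≫ b = a ≫ q) {k l : Fin n} (h : k < l) :
    pMapf F a b l ≫ pd F δ q k l h = pd F δ p k l h ≫ (F h).map (pMapf F a b k) := by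
  rcases lt_trichotomy i k with hk | rfl | hk
  · rw [pMapf_gt F _ _ hk, pMapf_gt F _ _ (hk.trans h), pd_gt F δ p hk, pd_gt F δ q hk]
    simp only [Category.assoc, Functor.map_comp, Iso.cancel_iso_hom_left,
      Iso.inv_hom_id_assoc]
    rw [← Functor.map_comp_assoc (F h) (pe F E E' hk).inv, Iso.inv_hom_id,
      CategoryTheory.Functor.map_id, Category.id_comp]
    simp
  · rw [pMapf_gt F _ _ h, pMapf_eq, pd_eq, pd_eq]
    simp only [Category.assoc, Iso.cancel_iso_hom_left, Iso.inv_hom_id_assoc,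
      ← Functor.map_comp]
    rw [reassoc_of% w]
  · exact (F_isZero F hadd _ (pz F G G' hk)).eq_of_tgt _ _

noncomputable def pMap {E E' G G' : A i} (p : E ⟶ E') (q : G ⟶ G') (a : E ⟶ G) (b : E' ⟶ G')
    (w : p ≫ b = a ≫ q) : pC F δ hδ hadd p ⟶ pC F δ hδ hadd q :=
  ComodHom.mk (M := pC F δ hδ hadd p) (N := pC F δ hδ hadd q) (pMapf F a b)
    (fun h => pMapf_comm F δ hadd p q a b w h)

theorem comod_hom_ext {M N : Comod F δ} (f g : M ⟶ N) (h : ∀ k, f.f k = g.f k) : f = g :=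
  ComodHom.ext (funext h)

theorem comod_comp_f {M N K : Comod F δ} (f : M ⟶ N) (g : N ⟶ K) (k : Fin n) :
    (f ≫ g).f k = f.f k ≫ g.f k := rfl

theorem comod_id_f {M : Comod F δ} (k : Fin n) :
    ComodHom.f (𝟙 M) k = 𝟙 (M.X k) := rfl

theorem comod_epi {M N : Comod F δ} (f : M ⟶ N) (h : ∀ k, Epi (f.f k)) : Epi f where
  left_cancellation a b w := by
    apply comod_hom_ext
    intro k
    have := h k
    rw [← cancel_epi (f.f k)]
    exact congrArg (fun t => ComodHom.f t k) w

theorem comod_mono {M N : Comod F δ} (f : M ⟶ N) (h : ∀ k, Mono (f.f k)) : Mono f where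
  right_cancellation a b w := by
    apply comod_hom_ext
    intro k
    have := h k
    rw [← cancel_mono (f.f k)]
    exact congrArg (fun t => ComodHom.f t k) w

theorem comod_mono_f (hadd : ∀ ⦃i j : Fin n⦄ (h : i < j), (F h).Additive)
    (hlex : ∀ ⦃i j : Fin n⦄ (h : i < j), PreservesFiniteLimits (F h))
    {M N : Comod F δ} (f : M ⟶ N) (hf : Mono f) (k : Fin n) : Mono (f.f k) := by
  have key : ∀ (k l : Fin n) (h : k < l), ∃ d : kernel (f.f l) ⟶ (F h).obj (kernel (f.f k)),
      d ≫ (F h).map (kernel.ι (f.f k)) = kernel.ι (f.f l) ≫ M.d h := by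
    intro k l h
    have := hadd h
    have := hlex h
    refine ⟨kernel.lift ((F h).map (f.f k)) (kernel.ι (f.f l) ≫ M.d h) ?_ ≫
      (PreservesKernel.iso (F h) (f.f k)).inv, ?_⟩
    · rw [Category.assoc, ← f.comm, kernel.condition_assoc, zero_comp]
    · simp
  choose d hd using key
  let K : Comod F δ :=
    { X := fun k => kernel (f.f k)
      d := fun {k l} h => d k l h
      compat := by
        intro k l m h₁ h₂
        have := hlex h₁
        have := hlex h₂
        rw [← cancel_mono ((F h₂).map ((F h₁).map (kernel.ι (f.f k))))]
        rw [Category.assoc, ← Functor.map_comp, hd, Functor.map_comp, reassoc_of% hd, M.compat,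
          ← reassoc_of% hd, Category.assoc]
        congr 1
        exact (δ h₁ h₂).naturality _ }
  let ι : K ⟶ M := ComodHom.mk (M := K) (fun k => kernel.ι (f.f k)) (fun {k l} h => (hd k l h).symm)
  let z : K ⟶ M := ComodHom.mk (M := K) (fun k => 0) (fun {k l} h => by
    have := hadd h
    simp)
  have hz : ι = z := by
    rw [← cancel_mono f]
    apply comod_hom_ext
    intro k
    rw [comod_comp_f, comod_comp_f]
    change kernel.ι (f.f k) ≫ f.f k = 0 ≫ f.f k
    simp
  have hk : kernel.ι (f.f k) = 0 := congrArg (fun t => ComodHom.f t k) hz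
  exact Preadditive.mono_of_kernel_zero hk

noncomputable def psf (N : Comod F δ) {E : A i} (t : N.X i ⟶ E) : ∀ k, N.X k ⟶ pY F E E k :=
  pm (X := N.X) (Y := pY F E E) (fun _ h => N.d h ≫ (F h).map t ≫ (pe F E E h).inv)
          (t ≫ (pe0 F E E).inv)

theorem psf_gt (N : Comod F δ) {E : A i} (t : N.X i ⟶ E) {k : Fin n} (h : i < k) :
    psf F δ N t k = N.d h ≫ (F h).map t ≫ (pe F E E h).inv := pm_gt _ _ h

theorem psf_eq (N : Comod F δ) {E : A i} (t : N.X i ⟶ E) :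
    psf F δ N t i = t ≫ (pe0 F E E).inv := pm_eq _ _

theorem psf_comm (hadd : ∀ ⦃i j : Fin n⦄ (h : i < j), (F h).Additive)
    (N : Comod F δ) {E : A i} (t : N.X i ⟶ E) {k l : Fin n} (h : k < l) :
    psf F δ N t l ≫ pd F δ (𝟙 E) k l h = N.d h ≫ (F h).map (psf F δ N t k) := by
  rcases lt_trichotomy i k with hk | rfl | hk
  · rw [psf_gt F δ _ _ hk, psf_gt F δ _ _ (hk.trans h), pd_gt F δ _ hk]
    simp only [Category.assoc, Functor.map_comp, Iso.inv_hom_id_assoc]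
    rw [reassoc_of% N.compat hk h]
    simp
  · rw [psf_gt F δ _ _ h, psf_eq, pd_eq]
    simp
  · exact (F_isZero F hadd _ (pz F E E hk)).eq_of_tgt _ _

theorem psf_fac_gt {M N : Comod F δ} (f : M ⟶ N) {E : A i} (t : N.X i ⟶ E) {k : Fin n} (hk : i < k)
    (gi : M.X i ⟶ pY F E E i) (gk : M.X k ⟶ pY F E E k)
    (hg : gk ≫ pd F δ (𝟙 E) i k hk = M.d hk ≫ (F hk).map gi)
    (ht : f.f i ≫ t = gi ≫ (pe0 F E E).hom) : f.f k ≫ psf F δ N t k = gk := by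
  rw [pd_eq, Category.id_comp] at hg
  rw [psf_gt F δ N t hk, ← Category.assoc, f.comm, Category.assoc, ← Functor.map_comp_assoc, ht,
    Functor.map_comp, Category.assoc, ← reassoc_of% hg, ← Functor.map_comp_assoc, Iso.inv_hom_id,
    CategoryTheory.Functor.map_id, Category.id_comp, Iso.hom_inv_id, Category.comp_id]

theorem psf_fac_eq {M N : Comod F δ} (f : M ⟶ N) {E : A i} (t : N.X i ⟶ E)
    (gi : M.X i ⟶ pY F E E i)
    (ht : f.f i ≫ t = gi ≫ (pe0 F E E).hom) : f.f i ≫ psf F δ N t i = gi := by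
  rw [psf_eq, reassoc_of% ht, Iso.hom_inv_id, Category.comp_id]

/-- the cofree comodule on an injective is injective. -/
theorem pC_injective (hlex : ∀ ⦃i j : Fin n⦄ (h : i < j), PreservesFiniteLimits (F h))
    (E : A i) (hE : Injective E) : Injective (pC F δ hδ hadd (𝟙 E)) where
  factors {M N} g f hf := by
    have hfi : Mono (f.f i) := comod_mono_f F δ hadd hlex f hf i
    let gf : ∀ k, M.X k ⟶ pY F E E k := g.f
    let g0 : M.X i ⟶ E := gf i ≫ (pe0 F E E).hom
    let t : N.X i ⟶ E := Injective.factorThru g0 (f.f i)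
    have ht : f.f i ≫ t = g0 := Injective.comp_factorThru g0 (f.f i)
    let s : N ⟶ pC F δ hδ hadd (𝟙 E) :=
      ComodHom.mk (N := pC F δ hδ hadd (𝟙 E)) (psf F δ N t)
        (fun h => psf_comm F δ hadd N t h)
    refine ⟨s, ?_⟩
    apply comod_hom_ext
    intro k
    change f.f k ≫ psf F δ N t k = gf k
    rcases lt_trichotomy i k with hk | rfl | hk
    · exact psf_fac_gt F δ f t hk (gf i) (gf k) (g.comm hk) ht
    · exact psf_fac_eq F δ f t (gf i) ht
    · exact (pz F E E hk).eq_of_tgt _ _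

theorem pMapf_epi {E E' G G' : A i} (a : E ⟶ G) (b : E' ⟶ G') (hb : Epi b)
    (ha : ∀ ⦃k : Fin n⦄ (h : i < k), Epi ((F h).map a)) (k : Fin n) : Epi (pMapf F a b k) := by
  rcases lt_trichotomy i k with hk | rfl | hk
  · have := ha hk
    rw [pMapf_gt F _ _ hk]
    infer_instance
  · rw [pMapf_eq]
    infer_instance
  · exact ⟨fun _ _ _ => (pz F G G' hk).eq_of_src _ _⟩

theorem pMapf_mono {E E' G G' : A i} (a : E ⟶ G) (b : E' ⟶ G') (hb : Mono b)
    (ha : ∀ ⦃k : Fin n⦄ (h : i < k), Mono ((F h).map a)) (k : Fin n) : Mono (pMapf F a b k) := by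
  rcases lt_trichotomy i k with hk | rfl | hk
  · have := ha hk
    rw [pMapf_gt F _ _ hk]
    infer_instance
  · rw [pMapf_eq]
    infer_instance
  · exact ⟨fun _ _ _ => (pz F E E' hk).eq_of_tgt _ _⟩

theorem split_aux {j : Fin n} (hij : i < j) {E E' G : A i} (p : E ⟶ E') (q : G ⟶ E') (c : E' ⟶ G)
    (hc : c ≫ q = 𝟙 E') (a : E ⟶ G)
    (ri : pY F G E' i ⟶ pY F E E' i) (rj : pY F G E' j ⟶ pY F E E' j)
    (hr : pMapf F a (𝟙 E') i ≫ ri = 𝟙 _)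
    (hcomm : rj ≫ pd F δ p i j hij = pd F δ q i j hij ≫ (F hij).map ri) :
    IsSplitEpi ((F hij).map p) := by
  have hri : ri = (pe0 F G E').hom ≫ (pe0 F E E').inv := by
    rw [pMapf_eq, Category.id_comp, Category.assoc] at hr
    rw [← Iso.inv_comp_eq, ← Category.comp_id (pe0 F E E').inv, Iso.eq_inv_comp]
    exact hr
  rw [hri, pd_eq, pd_eq] at hcomm
  have hc2 : (pe F G E' hij).inv ≫ rj ≫ (pe F E E' hij).hom ≫ (F hij).map p =
      (F hij).map q := by
    have := congrArg (fun x => (pe F G E' hij).inv ≫ x ≫ (F hij).map (pe0 F E E').hom) hcomm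
    simp only [Category.assoc, ← Functor.map_comp, Iso.inv_hom_id, Iso.inv_hom_id_assoc,
      Category.comp_id] at this
    exact this
  refine ⟨⟨⟨(F hij).map c ≫ (pe F G E' hij).inv ≫ rj ≫ (pe F E E' hij).hom, ?_⟩⟩⟩
  simp only [Category.assoc]
  rw [hc2, ← Functor.map_comp, hc, CategoryTheory.Functor.map_id]

end Helpers

theorem stmt_15 (hn : 2 ≤ n)
    (hδ : ∀ ⦃i k l j : Fin n⦄ (h₁ : i < k) (h₂ : k < l) (h₃ : l < j) (X : A i),
      (δ h₁ (h₂.trans h₃)).app X ≫ (δ h₂ h₃).app ((F h₁).obj X) =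
        (δ (h₁.trans h₂) h₃).app X ≫ (F h₃).map ((δ h₁ h₂).app X))
    (hadd : ∀ ⦃i j : Fin n⦄ (h : i < j), (F h).Additive)
    (hlex : ∀ ⦃i j : Fin n⦄ (h : i < j), PreservesFiniteLimits (F h))
    (hH : Hereditary (Comod F δ))
    ⦃i j : Fin n⦄ (hij : i < j)
    (E E' : A i) (p : E ⟶ E') (hp : Epi p)
    (hE : Injective E) (hE' : Injective E') :
    IsSplitEpi ((F hij).map p) := by
  have inj1 := pC_injective F δ hadd hδ hlex E hE
  let e := pMap F δ hadd hδ (𝟙 E) p (𝟙 E) p rfl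
  have he : Epi e := comod_epi F δ e
    (pMapf_epi F (𝟙 E) p hp (fun _ _ => inferInstance))
  have inj2 := hH e he inj1
  let m := pMap F δ hadd hδ p (biprod.fst : E' ⊞ E ⟶ E') (biprod.lift p (𝟙 E)) (𝟙 E') (by simp)
  have hs : IsSplitMono (biprod.lift p (𝟙 E)) := ⟨⟨⟨biprod.snd, by simp⟩⟩⟩
  have hm : Mono m := comod_mono F δ m
    (pMapf_mono F (biprod.lift p (𝟙 E)) (𝟙 E') inferInstance (fun _ _ => inferInstance))
  obtain ⟨r, hr⟩ := inj2.factors (𝟙 _) m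
  exact split_aux F δ hij p biprod.fst biprod.inl biprod.inl_fst (biprod.lift p (𝟙 E))
    (r.f i) (r.f j) (congrArg (fun t => ComodHom.f t i) hr) (r.comm hij)
end
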